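/- Let ℓ be an odd prime different from char(K) with ζ_ℓ ∈ K, suppose char(K) ≠ 2, and set W'_ℓ := ⟨W_ℓ, ζ_4⟩ and Γ'_{ℓ,E} := Γ_ℓ ∩ K(W'_ℓ)^×. Then K(Γ_ℓ) ∩ K(W'_ℓ) = K(Γ'_{ℓ,E}) and [K(⟨K^×, W'_ℓ, Γ_ℓ⟩):K] = |Γ_ℓ : K^×| · [K(W'_ℓ):K] / |Γ'_{ℓ,E} : K^×|. -/

import Mathlib

noncomputable section

open IntermediateField

/-- `K^×` viewed as a subgroup of the units of the algebraic closure of `K`. -/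
def baseUnits (K : Type*) [Field K] : Subgroup (AlgebraicClosure K)ˣ :=
  (Units.map (algebraMap K (AlgebraicClosure K)).toMonoidHom).range

/-- The subgroup of `(AlgebraicClosure K)ˣ` of elements whose `m`-th power lies in `K^×`. -/
def radGroup (K : Type*) [Field K] (m : ℕ) : Subgroup (AlgebraicClosure K)ˣ where
  carrier := {x | ∃ y : K, algebraMap K (AlgebraicClosure K) y = (x : AlgebraicClosure K) ^ m}
  one_mem' := ⟨1, by simp⟩
  mul_mem' := by
    rintro a b ⟨y, hy⟩ ⟨z, hz⟩
    exact ⟨y * z, by rw [map_mul, hy, hz, Units.val_mul, mul_pow]⟩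
  inv_mem' := by
    rintro a ⟨y, hy⟩
    refine ⟨y⁻¹, ?_⟩
    rw [map_inv₀, hy, Units.val_inv_eq_inv_val, inv_pow]

lemma radGroup_le (K : Type*) [Field K] {m k : ℕ} :
    radGroup K m ≤ radGroup K (m * k) := by
  rintro x ⟨y, hy⟩
  exact ⟨y ^ k, by rw [map_pow, hy, ← pow_mul]⟩

/-- The group `√[ℓ^∞]{K^×}` of radicals of `ℓ`-power order over `K`. -/
def radInf (K : Type*) [Field K] (ℓ : ℕ) : Subgroup (AlgebraicClosure K)ˣ where
  carrier := {x | ∃ n : ℕ, x ∈ radGroup K (ℓ ^ n)}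
  one_mem' := ⟨0, one_mem _⟩
  mul_mem' := by
    rintro a b ⟨n, ha⟩ ⟨m, hb⟩
    refine ⟨n + m, mul_mem ?_ ?_⟩
    · have h : radGroup K (ℓ ^ n) ≤ radGroup K (ℓ ^ (n + m)) := by
        rw [pow_add]; exact radGroup_le K
      exact h ha
    · have h : radGroup K (ℓ ^ m) ≤ radGroup K (ℓ ^ (n + m)) := by
        rw [add_comm, pow_add]; exact radGroup_le K
      exact h hb
  inv_mem' := by
    rintro a ⟨n, ha⟩
    exact ⟨n, inv_mem ha⟩

/-- The units of the algebraic closure lying in an intermediate field `F`, as a subgroup. -/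
def unitsIn {K : Type*} [Field K] (F : IntermediateField K (AlgebraicClosure K)) :
    Subgroup (AlgebraicClosure K)ˣ where
  carrier := {x | (x : AlgebraicClosure K) ∈ F}
  one_mem' := by
    show ((1 : (AlgebraicClosure K)ˣ) : AlgebraicClosure K) ∈ F
    simpa using one_mem F
  mul_mem' := by
    intro a b ha hb
    show ((a * b : (AlgebraicClosure K)ˣ) : AlgebraicClosure K) ∈ F
    rw [Units.val_mul]
    exact mul_mem ha hb
  inv_mem' := by
    intro x hx
    show ((x⁻¹ : (AlgebraicClosure K)ˣ) : AlgebraicClosure K) ∈ F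
    rw [Units.val_inv_eq_inv_val]
    exact inv_mem hx

/-- `K(ζ_{2𝒫})`: the extension of `K` generated by all roots of unity whose order is `4` or
an odd prime, and not divisible by the characteristic of `K`. -/
def cyclo2P (K : Type*) [Field K] : IntermediateField K (AlgebraicClosure K) :=
  IntermediateField.adjoin K
    {x : AlgebraicClosure K |
      ∃ n : ℕ, (n = 4 ∨ (n.Prime ∧ Odd n)) ∧ ¬ (ringChar K ∣ n) ∧ IsPrimitiveRoot x n}

/-- The set of roots of unity of order exactly `n` in the algebraic closure of `K`. -/
def primRoots (K : Type*) [Field K] (n : ℕ) : Set (AlgebraicClosure K) :=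
  {x | IsPrimitiveRoot x n}

/-- The set of roots of unity of order `ℓ^n` for `n ≤ t` (all of them if `t = ∞`). -/
def pPowRoots (K : Type*) [Field K] (ℓ : ℕ) (t : ℕ∞) : Set (AlgebraicClosure K) :=
  {x | ∃ n : ℕ, (n : ℕ∞) ≤ t ∧ IsPrimitiveRoot x (ℓ ^ n)}

/-- The set of units that are roots of unity of order `ℓ^n` for `n ≤ t`. -/
def pPowRootsUnits (K : Type*) [Field K] (ℓ : ℕ) (t : ℕ∞) : Set (AlgebraicClosure K)ˣ :=
  {x | ∃ n : ℕ, (n : ℕ∞) ≤ t ∧ IsPrimitiveRoot (x : AlgebraicClosure K) (ℓ ^ n)}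

/-!
Let `n = |Γ : Γ ∩ E^×|` be odd, with `ζ_p ∈ E` for every prime `p ∣ n`. The order `d` of a class
`a E^×` with `a ∈ Γ` equals `[E(a) : E]`, because `X ^ d - a ^ d` is irreducible. If `d = p` is
prime, the embedding `a ↦ ζ_p a` of `E(a)` fixes only `E` and multiplies every `b ∈ Γ ∩ E(a)^×`
by a power of `ζ_p`, so that `b` is a power of `a` times an element of `E`. Hence passing from `E`
to `E(a)` divides `n` by exactly `p`, and induction on `n` gives Kneser's theorem
`[E(Γ) : E] = |Γ : Γ ∩ E^×|`.

For `K ⊆ E ⊆ K(Γ)` the fields `M = K(Γ ∩ E^×)` and `E` meet `Γ` in the same group, so `K(Γ)` has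
the same degree over both, whence `M = E`. Applied to `K(Γ) ∩ E` for an arbitrary `E` this is the
first claim; the second is Kneser's theorem over `E` and the multiplicativity of the index.
-/

section QuotientOrder

variable {G : Type*} [Group G] {H Γ : Subgroup G} [H.Normal] {a : G}

lemma pow_mem_iff_orderOf_mk_dvd {n : ℕ} : a ^ n ∈ H ↔ orderOf (a : G ⧸ H) ∣ n := by
  rw [orderOf_dvd_iff_pow_eq_one, ← QuotientGroup.mk_pow, QuotientGroup.eq_one_iff]

lemma relIndex_eq_card_map_mk' : H.relIndex Γ = Nat.card (Γ.map (QuotientGroup.mk' H)) := by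
  rw [← Subgroup.relIndex_ker, QuotientGroup.ker_mk']

lemma relIndex_zpowers_eq_orderOf_mk :
    H.relIndex (Subgroup.zpowers a) = orderOf (a : G ⧸ H) := by
  rw [relIndex_eq_card_map_mk', MonoidHom.map_zpowers, Nat.card_zpowers, QuotientGroup.mk'_apply]

lemma orderOf_mk_dvd_relIndex (ha : a ∈ Γ) : orderOf (a : G ⧸ H) ∣ H.relIndex Γ := by
  rw [relIndex_eq_card_map_mk']
  exact Subgroup.orderOf_dvd_natCard _ (Subgroup.mem_map_of_mem (QuotientGroup.mk' H) ha)

lemma exists_mem_orderOf_mk_eq_prime {p : ℕ} (hp : p.Prime) (h0 : H.relIndex Γ ≠ 0)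
    (hdvd : p ∣ H.relIndex Γ) : ∃ a ∈ Γ, orderOf (a : G ⧸ H) = p := by
  have : Fact p.Prime := ⟨hp⟩
  rw [relIndex_eq_card_map_mk'] at h0 hdvd
  have : Finite (Γ.map (QuotientGroup.mk' H)) := Nat.finite_of_card_ne_zero h0
  obtain ⟨⟨x, hx⟩, hord⟩ := exists_prime_orderOf_dvd_card' p hdvd
  obtain ⟨a, ha, rfl⟩ := Subgroup.mem_map.1 hx
  exact ⟨a, ha, (Subgroup.orderOf_mk _ hx).symm.trans hord⟩

end QuotientOrder

/-- Kneser's condition for odd `n`: the field `F` contains a primitive `p`-th root of unity for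
every prime divisor `p` of `n`. Roots of unity of order `p ^ k` with `k > 1` are not required. -/
def HasPrimeRootsOfUnity (F : Type*) [Field F] (n : ℕ) : Prop :=
  ∀ p : ℕ, p.Prime → p ∣ n → ∃ ζ : F, IsPrimitiveRoot ζ p

namespace HasPrimeRootsOfUnity

variable {F : Type*} [Field F] {m n : ℕ}

lemma of_dvd (h : HasPrimeRootsOfUnity F n) (hmn : m ∣ n) : HasPrimeRootsOfUnity F m :=
  fun p hp hpm => h p hp (hpm.trans hmn)

lemma of_isPrimitiveRoot {p : ℕ} (hp : p.Prime) {ζ : F} (hζ : IsPrimitiveRoot ζ p) (k : ℕ) :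
    HasPrimeRootsOfUnity F (p ^ k) := fun _ hq hqp =>
  ⟨ζ, (Nat.prime_dvd_prime_iff_eq hq hp).1 (hq.dvd_of_dvd_pow hqp) ▸ hζ⟩

lemma map (h : HasPrimeRootsOfUnity F n) (L : Type*) [Field L] [Algebra F L] :
    HasPrimeRootsOfUnity L n := fun p hp hpn =>
  let ⟨ζ, hζ⟩ := h p hp hpn
  ⟨algebraMap F L ζ, hζ.map_of_injective (algebraMap F L).injective⟩

end HasPrimeRootsOfUnity

lemma exists_eq_pow_mul_of_pow_eq_pow {R : Type*} [CommRing R] [IsDomain R] {ζ x y : R} {n : ℕ}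
    (hn : 0 < n) (hζ : IsPrimitiveRoot ζ n) (h : x ^ n = y ^ n) : ∃ i : ℕ, x = ζ ^ i * y := by
  have hx : x ∈ Polynomial.nthRoots n (y ^ n) := (Polynomial.mem_nthRoots hn).2 h
  rw [hζ.nthRoots_eq rfl] at hx
  obtain ⟨i, -, rfl⟩ := Multiset.mem_map.1 hx
  exact ⟨i, rfl⟩

/-- The group of nonzero elements of `F`, as a subgroup of the units of an extension field `Ω`. -/
def scalarUnits (F Ω : Type*) [Field F] [Field Ω] [Algebra F Ω] : Subgroup Ωˣ :=
  (Units.map (algebraMap F Ω).toMonoidHom).range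

section SimpleRadical

open Polynomial

variable {F Ω : Type*} [Field F] [Field Ω] [Algebra F Ω]

lemma mem_scalarUnits {x : Ωˣ} : x ∈ scalarUnits F Ω ↔ ∃ c : F, algebraMap F Ω c = x := by
  refine ⟨fun ⟨u, hu⟩ => ⟨u, congrArg Units.val hu⟩, fun ⟨c, hc⟩ => ?_⟩
  have hc0 : c ≠ 0 := by
    rintro rfl
    exact x.ne_zero (by rw [← hc, map_zero])
  exact ⟨Units.mk0 c hc0, Units.ext hc⟩

lemma exists_algebraMap_eq_pow_orderOf_mk (a : Ωˣ) :
    ∃ c : F, algebraMap F Ω c = (a : Ω) ^ orderOf (a : Ωˣ ⧸ scalarUnits F Ω) := by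
  rw [← Units.val_pow_eq_pow_val, ← mem_scalarUnits, pow_mem_iff_orderOf_mk_dvd]

lemma X_pow_orderOf_mk_sub_C_irreducible {a : Ωˣ}
    (hodd : Odd (orderOf (a : Ωˣ ⧸ scalarUnits F Ω)))
    (hF : HasPrimeRootsOfUnity F (orderOf (a : Ωˣ ⧸ scalarUnits F Ω))) {c : F}
    (hc : algebraMap F Ω c = (a : Ω) ^ orderOf (a : Ωˣ ⧸ scalarUnits F Ω)) :
    Irreducible (X ^ orderOf (a : Ωˣ ⧸ scalarUnits F Ω) - C c) := by
  refine X_pow_sub_C_irreducible_of_odd hodd fun p hp ⟨k, hk⟩ b hb => ?_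
  obtain ⟨ζ, hζ⟩ := hF p hp ⟨k, hk⟩
  have hpow : ((a : Ω) ^ k) ^ p = algebraMap F Ω b ^ p := by
    rw [← pow_mul, mul_comm, ← hk, ← hc, ← hb, map_pow]
  obtain ⟨i, hi⟩ := exists_eq_pow_mul_of_pow_eq_pow hp.pos
    (hζ.map_of_injective (algebraMap F Ω).injective) hpow
  have hak : a ^ k ∈ scalarUnits F Ω := mem_scalarUnits.2 ⟨ζ ^ i * b, by simp [hi]⟩
  rw [pow_mem_iff_orderOf_mk_dvd, hk] at hak
  have hk0 : 0 < k := Nat.pos_of_mul_pos_left (hk ▸ hodd.pos)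
  exact (Nat.le_of_dvd hk0 hak).not_gt (lt_mul_of_one_lt_left hk0 hp.one_lt)

lemma finrank_adjoin_simple_eq_orderOf_mk {a : Ωˣ}
    (hodd : Odd (orderOf (a : Ωˣ ⧸ scalarUnits F Ω)))
    (hF : HasPrimeRootsOfUnity F (orderOf (a : Ωˣ ⧸ scalarUnits F Ω))) :
    Module.finrank F F⟮(a : Ω)⟯ = orderOf (a : Ωˣ ⧸ scalarUnits F Ω) := by
  obtain ⟨c, hc⟩ := exists_algebraMap_eq_pow_orderOf_mk (F := F) a
  have hmonic := monic_X_pow_sub_C c hodd.pos.ne'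
  have hroot : aeval (a : Ω) (X ^ orderOf (a : Ωˣ ⧸ scalarUnits F Ω) - C c) = 0 := by simp [hc]
  rw [IntermediateField.adjoin.finrank ⟨_, hmonic, hroot⟩,
    ← minpoly.eq_of_irreducible_of_monic (X_pow_orderOf_mk_sub_C_irreducible hodd hF hc)
      hroot hmonic, natDegree_X_pow_sub_C]

lemma orderOf_mk_dvd_finrank_of_mem {a : Ωˣ} {L : IntermediateField F Ω} (ha : (a : Ω) ∈ L)
    (hodd : Odd (orderOf (a : Ωˣ ⧸ scalarUnits F Ω)))
    (hF : HasPrimeRootsOfUnity F (orderOf (a : Ωˣ ⧸ scalarUnits F Ω))) :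
    orderOf (a : Ωˣ ⧸ scalarUnits F Ω) ∣ Module.finrank F L := by
  rw [← finrank_adjoin_simple_eq_orderOf_mk hodd hF]
  exact finrank_dvd_of_le_right (adjoin_simple_le_iff.2 ha)

lemma exists_algHom_gen_eq_mul {a : Ω} {n : ℕ} {c ζ : F} (hn : 0 < n)
    (hdeg : Module.finrank F F⟮a⟯ = n) (hc : algebraMap F Ω c = a ^ n) (hζ : ζ ^ n = 1) :
    ∃ σ : F⟮a⟯ →ₐ[F] Ω, σ (AdjoinSimple.gen F a) = algebraMap F Ω ζ * a := by
  have hmonic := monic_X_pow_sub_C c hn.ne'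
  have hroot : aeval a (X ^ n - C c) = 0 := by simp [hc]
  have hint : IsIntegral F a := ⟨_, hmonic, hroot⟩
  have hmin : minpoly F a = X ^ n - C c :=
    (eq_of_monic_of_dvd_of_natDegree_le (minpoly.monic hint) hmonic (minpoly.dvd F a hroot)
      (by rw [natDegree_X_pow_sub_C, ← adjoin.finrank hint, hdeg])).symm
  have hconj : aeval (algebraMap F Ω ζ * a) (minpoly F (adjoin.powerBasis hint).gen) = 0 := by
    rw [adjoin.powerBasis_gen, minpoly_gen, hmin, map_sub, map_pow, aeval_X, aeval_C, mul_pow,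
      ← map_pow, hζ, map_one, one_mul, hc, sub_self]
  exact ⟨(adjoin.powerBasis hint).lift _ hconj, (adjoin.powerBasis hint).lift_gen _ hconj⟩

lemma exists_apply_eq_pow_mul_of_pow_eq_algebraMap {n : ℕ} (hn : 0 < n) {ζ : F}
    (hζ : IsPrimitiveRoot ζ n) {L : IntermediateField F Ω} (σ : L →ₐ[F] Ω) {x : L} {d : F}
    (hx : algebraMap F Ω d = (x : Ω) ^ n) : ∃ i : ℕ, σ x = algebraMap F Ω ζ ^ i * x := by
  have hxL : x ^ n = algebraMap F L d := Subtype.ext hx.symm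
  refine exists_eq_pow_mul_of_pow_eq_pow hn (hζ.map_of_injective (algebraMap F Ω).injective) ?_
  rw [← map_pow, hxL, AlgHom.commutes, hx]

lemma equalizer_eq_bot_of_finrank_prime {L : Type*} [Field L] [Algebra F L]
    (hL : (Module.finrank F L).Prime) {σ τ : L →ₐ[F] Ω} (hne : σ ≠ τ) :
    AlgHom.equalizer σ τ = ⊥ := by
  have := Subalgebra.isSimpleOrder_of_finrank_prime F L hL
  exact (eq_bot_or_eq_top _).resolve_right fun h => hne (AlgHom.equalizer_eq_top.1 h)

lemma mem_sup_zpowers_of_mem_adjoin_simple {p : ℕ} (hp : p.Prime) {ζ : F}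
    (hζ : IsPrimitiveRoot ζ p) {a b : Ωˣ} (hdeg : Module.finrank F F⟮(a : Ω)⟯ = p)
    (ha : a ^ p ∈ scalarUnits F Ω) (hb : b ^ p ∈ scalarUnits F Ω) (hba : (b : Ω) ∈ F⟮(a : Ω)⟯) :
    b ∈ scalarUnits F Ω ⊔ Subgroup.zpowers a := by
  obtain ⟨c, hc⟩ := mem_scalarUnits.1 ha
  obtain ⟨d, hd⟩ := mem_scalarUnits.1 hb
  have hζΩ := hζ.map_of_injective (algebraMap F Ω).injective
  obtain ⟨σ, hσ⟩ := exists_algHom_gen_eq_mul hp.pos hdeg (hc.trans (a.val_pow_eq_pow_val p))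
    hζ.pow_eq_one
  have hσval : σ ≠ F⟮(a : Ω)⟯.val := by
    rintro rfl
    exact hζΩ.ne_one hp.one_lt (mul_right_cancel₀ a.ne_zero (hσ.symm.trans (one_mul _).symm))
  -- `σ` scales both `b` and `a ^ i` by `ζ ^ i`, so it fixes their quotient.
  obtain ⟨i, hi⟩ := exists_apply_eq_pow_mul_of_pow_eq_algebraMap hp.pos hζ σ
    (x := ⟨b, hba⟩) (d := d) (hd.trans (b.val_pow_eq_pow_val p))
  have hfix : ⟨b, hba⟩ / AdjoinSimple.gen F (a : Ω) ^ i ∈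
      AlgHom.equalizer σ F⟮(a : Ω)⟯.val := by
    have hζ0 := hζΩ.ne_zero hp.ne_zero
    rw [AlgHom.mem_equalizer, map_div₀, map_pow, hσ, hi, mul_pow,
      mul_div_mul_left _ _ (pow_ne_zero i hζ0)]
    rfl
  rw [equalizer_eq_bot_of_finrank_prime (hdeg ▸ hp) hσval] at hfix
  obtain ⟨e, he⟩ := Algebra.mem_bot.1 hfix
  have hmem : b / a ^ i ∈ scalarUnits F Ω := by
    refine mem_scalarUnits.2 ⟨e, ?_⟩
    rw [Units.val_div_eq_div_val, Units.val_pow_eq_pow_val]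
    exact congrArg Subtype.val he
  rw [← div_mul_cancel b (a ^ i)]
  exact Subgroup.mul_mem_sup hmem (pow_mem (Subgroup.mem_zpowers a) i)

end SimpleRadical

section AdjoinUnits

variable {K Ω : Type*} [Field K] [Field Ω] [Algebra K Ω] {E E' : IntermediateField K Ω}
  {Γ : Subgroup Ωˣ} {a : Ωˣ}

/-- The field `K(Γ)` generated over `K` by a group `Γ` of nonzero elements of `Ω`. -/
def adjoinUnits (K : Type*) {Ω : Type*} [Field K] [Field Ω] [Algebra K Ω] (Γ : Subgroup Ωˣ) :
    IntermediateField K Ω :=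
  adjoin K (Units.val '' (Γ : Set Ωˣ))

lemma mem_scalarUnits_intermediateField {x : Ωˣ} : x ∈ scalarUnits E Ω ↔ (x : Ω) ∈ E :=
  mem_scalarUnits.trans ⟨fun ⟨c, hc⟩ => hc ▸ c.2, fun hx => ⟨⟨x, hx⟩, rfl⟩⟩

lemma scalarUnits_le_scalarUnits_intermediateField (E : IntermediateField K Ω) :
    scalarUnits K Ω ≤ scalarUnits E Ω := fun x hx => by
  obtain ⟨c, hc⟩ := mem_scalarUnits.1 hx
  exact mem_scalarUnits_intermediateField.2 (hc ▸ E.algebraMap_mem c)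

lemma gc_adjoinUnits_scalarUnits :
    GaloisConnection (adjoinUnits K) fun E : IntermediateField K Ω => scalarUnits E Ω := by
  intro Γ E
  rw [adjoinUnits, adjoin_le_iff, Set.image_subset_iff]
  exact forall₂_congr fun x _ => mem_scalarUnits_intermediateField.symm

lemma scalarUnits_mono (h : E ≤ E') : scalarUnits E Ω ≤ scalarUnits E' Ω :=
  gc_adjoinUnits_scalarUnits.monotone_u h

lemma le_scalarUnits_adjoinUnits (Γ : Subgroup Ωˣ) : Γ ≤ scalarUnits (adjoinUnits K Γ) Ω :=
  gc_adjoinUnits_scalarUnits.le_u_l Γ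

lemma adjoinUnits_scalarUnits_self : adjoinUnits K (scalarUnits K Ω) = ⊥ :=
  le_bot_iff.1 <| (gc_adjoinUnits_scalarUnits _ _).2 <|
    scalarUnits_le_scalarUnits_intermediateField ⊥

lemma adjoin_scalarUnits_union_union (W Γ : Subgroup Ωˣ) :
    adjoin K (Units.val '' (scalarUnits K Ω ∪ W ∪ Γ : Set Ωˣ)) =
      adjoinUnits K W ⊔ adjoinUnits K Γ := by
  rw [Set.image_union, Set.image_union, adjoin_union, adjoin_union]
  change adjoinUnits K (scalarUnits K Ω) ⊔ adjoinUnits K W ⊔ adjoinUnits K Γ = _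
  rw [adjoinUnits_scalarUnits_self, bot_sup_eq]

lemma mem_scalarUnits_sup_adjoin_simple {b : Ωˣ} {α : Ω} :
    b ∈ scalarUnits (E ⊔ K⟮α⟯ : IntermediateField K Ω) Ω ↔ (b : Ω) ∈ E⟮α⟯ := by
  rw [mem_scalarUnits_intermediateField, ← restrictScalars_adjoin_eq_sup, mem_restrictScalars]

lemma relfinrank_sup_adjoin_simple (E : IntermediateField K Ω) (α : Ω) :
    E.relfinrank (E ⊔ K⟮α⟯) = Module.finrank E E⟮α⟯ := by
  have hle : E ≤ E⟮α⟯.restrictScalars K := restrictScalars_adjoin_eq_sup K E {α} ▸ le_sup_left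
  rw [← restrictScalars_adjoin_eq_sup, relfinrank_eq_finrank_of_le hle]
  rfl

lemma scalarUnits_sup_adjoin_simple_inf (ha : a ∈ Γ)
    (hp : (orderOf (a : Ωˣ ⧸ scalarUnits E Ω)).Prime)
    (hodd : Odd ((scalarUnits E Ω).relIndex Γ))
    (hE : HasPrimeRootsOfUnity E ((scalarUnits E Ω).relIndex Γ)) :
    scalarUnits E Ω ⊔ scalarUnits (E ⊔ K⟮(a : Ω)⟯ : IntermediateField K Ω) Ω ⊓ Γ =
      scalarUnits E Ω ⊔ Subgroup.zpowers a := by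
  have hdvd {b : Ωˣ} (hb : b ∈ Γ) := orderOf_mk_dvd_relIndex (H := scalarUnits E Ω) hb
  have hdeg : Module.finrank E E⟮(a : Ω)⟯ = orderOf (a : Ωˣ ⧸ scalarUnits E Ω) :=
    finrank_adjoin_simple_eq_orderOf_mk (hodd.of_dvd_nat (hdvd ha)) (hE.of_dvd (hdvd ha))
  apply le_antisymm
  · refine sup_le le_sup_left fun b hb => ?_
    obtain ⟨hbE, hbΓ⟩ := Subgroup.mem_inf.1 hb
    rw [mem_scalarUnits_sup_adjoin_simple] at hbE
    obtain ⟨ζ, hζ⟩ := hE _ hp (hdvd ha)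
    have hord : orderOf (b : Ωˣ ⧸ scalarUnits E Ω) ∣ orderOf (a : Ωˣ ⧸ scalarUnits E Ω) :=
      hdeg ▸ orderOf_mk_dvd_finrank_of_mem hbE (hodd.of_dvd_nat (hdvd hbΓ))
        (hE.of_dvd (hdvd hbΓ))
    exact mem_sup_zpowers_of_mem_adjoin_simple hp hζ hdeg
      (pow_mem_iff_orderOf_mk_dvd.2 dvd_rfl) (pow_mem_iff_orderOf_mk_dvd.2 hord) hbE
  · refine sup_le_sup_left (Subgroup.zpowers_le.2 (Subgroup.mem_inf.2 ⟨?_, ha⟩)) _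
    exact mem_scalarUnits_sup_adjoin_simple.2 (mem_adjoin_simple_self E (a : Ω))

end AdjoinUnits

section Kneser

variable {K Ω : Type*} [Field K] [Field Ω] [Algebra K Ω] {Γ : Subgroup Ωˣ}

theorem relfinrank_sup_adjoinUnits (E : IntermediateField K Ω)
    (hodd : Odd ((scalarUnits E Ω).relIndex Γ))
    (hK : HasPrimeRootsOfUnity K ((scalarUnits E Ω).relIndex Γ)) :
    E.relfinrank (E ⊔ adjoinUnits K Γ) = (scalarUnits E Ω).relIndex Γ := by
  generalize hΓ : (scalarUnits E Ω).relIndex Γ = n at hodd hK ⊢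
  induction n using induction_on_primes generalizing E with
  | zero => exact absurd hodd (by decide)
  | one =>
    rw [relfinrank_eq_one_iff, sup_le_iff]
    exact ⟨le_rfl, (gc_adjoinUnits_scalarUnits _ _).2 (Subgroup.relIndex_eq_one.1 hΓ)⟩
  | prime_mul p n hp ih =>
    obtain ⟨hpodd, hnodd⟩ := Nat.odd_mul.1 hodd
    obtain ⟨a, haΓ, ha⟩ := exists_mem_orderOf_mk_eq_prime hp (hΓ ▸ hodd.pos.ne')
      (hΓ ▸ dvd_mul_right p n)
    set E' := E ⊔ K⟮(a : Ω)⟯ with hE'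
    have haΓ' : K⟮(a : Ω)⟯ ≤ adjoinUnits K Γ :=
      adjoin_simple_le_iff.2 <|
        mem_scalarUnits_intermediateField.1 (le_scalarUnits_adjoinUnits Γ haΓ)
    have hdeg : E.relfinrank E' = p := by
      rw [relfinrank_sup_adjoin_simple, ← ha]
      apply finrank_adjoin_simple_eq_orderOf_mk <;> rw [ha]
      exacts [hpodd, (hK.of_dvd (dvd_mul_right p n)).map E]
    have hindex : (scalarUnits E' Ω).relIndex Γ = n := by
      have hmul := Subgroup.relIndex_inf_mul_relIndex (scalarUnits E Ω) (scalarUnits E' Ω) Γ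
      rw [inf_eq_left.2 (scalarUnits_mono le_sup_left), hΓ, ← Subgroup.relIndex_sup_left,
        scalarUnits_sup_adjoin_simple_inf haΓ (ha ▸ hp) (hΓ ▸ hodd) (hΓ ▸ hK.map E),
        Subgroup.relIndex_sup_left, relIndex_zpowers_eq_orderOf_mk, ha] at hmul
      exact Nat.eq_of_mul_eq_mul_left hp.pos hmul
    have hsup : E' ⊔ adjoinUnits K Γ = E ⊔ adjoinUnits K Γ := by
      rw [hE', sup_assoc, sup_eq_right.2 haΓ']
    rw [← relfinrank_mul_relfinrank le_sup_left (sup_le_sup_left haΓ' E), hdeg, ← hsup,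
      ih E' hindex hnodd (hK.of_dvd (dvd_mul_left n p))]

theorem relfinrank_sup_adjoinUnits_eq_relIndex (hodd : Odd ((scalarUnits K Ω).relIndex Γ))
    (hK : HasPrimeRootsOfUnity K ((scalarUnits K Ω).relIndex Γ)) (E : IntermediateField K Ω) :
    E.relfinrank (E ⊔ adjoinUnits K Γ) = (scalarUnits E Ω).relIndex Γ :=
  have hdvd := Subgroup.relIndex_dvd_of_le_left Γ (scalarUnits_le_scalarUnits_intermediateField E)
  relfinrank_sup_adjoinUnits E (hodd.of_dvd_nat hdvd) (hK.of_dvd hdvd)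

theorem adjoinUnits_inf_scalarUnits (hodd : Odd ((scalarUnits K Ω).relIndex Γ))
    (hK : HasPrimeRootsOfUnity K ((scalarUnits K Ω).relIndex Γ)) {E : IntermediateField K Ω}
    (hE : E ≤ adjoinUnits K Γ) : adjoinUnits K (Γ ⊓ scalarUnits E Ω) = E := by
  set M := adjoinUnits K (Γ ⊓ scalarUnits E Ω)
  have hME : M ≤ E := (gc_adjoinUnits_scalarUnits _ _).2 inf_le_right
  have hinf : scalarUnits M Ω ⊓ Γ = scalarUnits E Ω ⊓ Γ :=
    le_antisymm (inf_le_inf_right Γ (scalarUnits_mono hME))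
      (le_inf (inf_comm Γ _ ▸ le_scalarUnits_adjoinUnits _) inf_le_right)
  have hM := relfinrank_sup_adjoinUnits_eq_relIndex hodd hK M
  rw [sup_eq_right.2 (hME.trans hE), ← Subgroup.inf_relIndex_right, hinf,
    Subgroup.inf_relIndex_right, ← relfinrank_mul_relfinrank hME hE] at hM
  have hL := relfinrank_sup_adjoinUnits_eq_relIndex hodd hK E
  rw [sup_eq_right.2 hE] at hL
  have hpos : 0 < (scalarUnits E Ω).relIndex Γ :=
    (hodd.of_dvd_nat (Subgroup.relIndex_dvd_of_le_left Γ
      (scalarUnits_le_scalarUnits_intermediateField E))).pos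
  rw [hL] at hM
  exact hME.antisymm <| relfinrank_eq_one_iff.1 <|
    Nat.eq_of_mul_eq_mul_right hpos (hM.trans (one_mul _).symm)

end Kneser

lemma unitsIn_eq_scalarUnits {K : Type*} [Field K]
    (E : IntermediateField K (AlgebraicClosure K)) :
    unitsIn E = scalarUnits E (AlgebraicClosure K) :=
  Subgroup.ext fun _ => mem_scalarUnits_intermediateField.symm

theorem stmt8_general {K Ω : Type*} [Field K] [Field Ω] [Algebra K Ω] {Γ : Subgroup Ωˣ}
    (hodd : Odd ((scalarUnits K Ω).relIndex Γ))
    (hK : HasPrimeRootsOfUnity K ((scalarUnits K Ω).relIndex Γ)) (E : IntermediateField K Ω) :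
    adjoinUnits K Γ ⊓ E = adjoinUnits K (Γ ⊓ scalarUnits E Ω) ∧
    E.relfinrank (E ⊔ adjoinUnits K Γ) * (scalarUnits K Ω).relIndex (Γ ⊓ scalarUnits E Ω) =
      (scalarUnits K Ω).relIndex Γ := by
  constructor
  · have hΓ : Γ ⊓ scalarUnits (adjoinUnits K Γ ⊓ E : IntermediateField K Ω) Ω =
        Γ ⊓ scalarUnits E Ω := by
      rw [gc_adjoinUnits_scalarUnits.u_inf, ← inf_assoc,
        inf_eq_left.2 (le_scalarUnits_adjoinUnits Γ)]
    rw [← hΓ, adjoinUnits_inf_scalarUnits hodd hK inf_le_left]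
  · rw [relfinrank_sup_adjoinUnits_eq_relIndex hodd hK, mul_comm, inf_comm,
      Subgroup.relIndex_inf_mul_relIndex,
      inf_eq_left.2 (scalarUnits_le_scalarUnits_intermediateField E)]

/-- Remark 4.2: Theorem 4.1 still holds with `W_ℓ` replaced by `W'_ℓ := ⟨W_ℓ, ζ₄⟩`. -/
theorem stmt8 (K : Type*) [Field K] (ℓ : ℕ) (hℓ : ℓ.Prime) (hℓodd : Odd ℓ)
    (hchar : ringChar K ≠ ℓ) (hchar2 : ringChar K ≠ 2)
    (hζℓ : ∃ z : K, IsPrimitiveRoot z ℓ)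
    (W : Subgroup (AlgebraicClosure K)ˣ)
    (hW : ∃ S : Set (AlgebraicClosure K)ˣ, S.Finite ∧
      (∀ x ∈ S, ∃ q : ℕ, q.Prime ∧ Odd q ∧ q ≠ ℓ ∧ q ≠ ringChar K ∧
        IsPrimitiveRoot (x : AlgebraicClosure K) q) ∧ W = Subgroup.closure S)
    (Γℓ : Subgroup (AlgebraicClosure K)ˣ) (hΓK : baseUnits K ≤ Γℓ)
    (hidx : ∃ m : ℕ, Subgroup.relIndex (baseUnits K) Γℓ = ℓ ^ m)
    (ζ4 : (AlgebraicClosure K)ˣ) (hζ4 : IsPrimitiveRoot (ζ4 : AlgebraicClosure K) 4) :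
    letI W' := W ⊔ Subgroup.closure {ζ4}
    IntermediateField.adjoin K (Units.val '' (Γℓ : Set (AlgebraicClosure K)ˣ)) ⊓
        IntermediateField.adjoin K (Units.val '' (W' : Set (AlgebraicClosure K)ˣ)) =
      IntermediateField.adjoin K (Units.val ''
        ((Γℓ ⊓ unitsIn (IntermediateField.adjoin K
          (Units.val '' (W' : Set (AlgebraicClosure K)ˣ)))) : Set (AlgebraicClosure K)ˣ)) ∧
    Module.finrank K (IntermediateField.adjoin K
        (Units.val '' ((baseUnits K ⊔ W' ⊔ Γℓ) : Set (AlgebraicClosure K)ˣ))) *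
      Subgroup.relIndex (baseUnits K) (Γℓ ⊓ unitsIn (IntermediateField.adjoin K
        (Units.val '' (W' : Set (AlgebraicClosure K)ˣ)))) =
    Subgroup.relIndex (baseUnits K) Γℓ *
      Module.finrank K (IntermediateField.adjoin K
        (Units.val '' (W' : Set (AlgebraicClosure K)ˣ))) := by
  obtain ⟨z, hz⟩ := hζℓ
  obtain ⟨m, hm⟩ := hidx
  have hodd : Odd ((baseUnits K).relIndex Γℓ) := hm ▸ hℓodd.pow
  have hK : HasPrimeRootsOfUnity K ((baseUnits K).relIndex Γℓ) :=
    hm ▸ HasPrimeRootsOfUnity.of_isPrimitiveRoot hℓ hz m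
  set W' := W ⊔ Subgroup.closure {ζ4}
  obtain ⟨hinf, hdeg⟩ := stmt8_general hodd hK (adjoinUnits K W')
  rw [← unitsIn_eq_scalarUnits] at hinf hdeg
  have hjoin : adjoin K (Units.val '' (baseUnits K ⊔ W' ⊔ Γℓ : Set (AlgebraicClosure K)ˣ)) =
      adjoinUnits K W' ⊔ adjoinUnits K Γℓ := adjoin_scalarUnits_union_union W' Γℓ
  refine ⟨hinf, ?_⟩
  rw [hjoin, ← finrank_bot_mul_relfinrank le_sup_left, mul_assoc, mul_comm]
  exact congrArg (· * Module.finrank K (adjoinUnits K W')) hdeg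

end
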